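/- Let U ⊆ ℝⁿ be open and let h : U → ℝ be continuous with h ≥ 0 on U and h harmonic on the open set {h > 0}. Then h is subharmonic on U in the mean-value sense: for every x ∈ U and s > 0 with cl(B_s(x)) ⊆ U, h(x) ≤ (average of h over the ball B_s(x)). -/

import Mathlib

open Metric Set MeasureTheory

noncomputable def lapl {n : ℕ} (f : EuclideanSpace ℝ (Fin n) → ℝ)
    (x : EuclideanSpace ℝ (Fin n)) : ℝ :=
  ∑ i : Fin n, fderiv ℝ (fun y => fderiv ℝ f y (EuclideanSpace.single i (1:ℝ))) x
    (EuclideanSpace.single i (1:ℝ))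

def IsHarmonicOn {n : ℕ} (f : EuclideanSpace ℝ (Fin n) → ℝ)
    (U : Set (EuclideanSpace ℝ (Fin n))) : Prop :=
  ContDiffOn ℝ 2 f U ∧ ∀ x ∈ U, lapl f x = 0

/-!
Fix a ball `B` of radius `s` about the origin. The function `V y = (s² - ‖y‖²) / 2` on `B`, extended
by zero, is Lipschitz with gradient `-y` on `B`, so integrating by parts against it turns the radial
flux of a `C²` function `g` into its Laplacian: `∫_B ∇g(y) · y = ∫ V Δg`. If `Δg ≥ 0` this is
nonnegative, and after rescaling it says that `r ↦ ∫_B g (r y) dy` is increasing on `[0, 1]`;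
comparing `r = 0` with `r = 1` gives the mean value inequality without surface integrals.

The function `h` is only continuous across `∂{h > 0}`, so it is replaced by `ψ ∘ h`, where `ψ` is
smooth, convex and nondecreasing, vanishes on `(-∞, ε]` and lies within `2ε` of the identity on
`[0, ∞)`. Then `ψ ∘ h` is `C²` on all of `U`, and `Δ(ψ ∘ h) = ψ''(h) |∇h|² + ψ'(h) Δh ≥ 0`. Letting
`ε → 0` yields the claim.
-/

open Filter Topology
open scoped ContDiff Laplacian Pointwise

/-- For `ε > 0`, a smooth, convex, nondecreasing approximation of the positive part of `t`,
vanishing for `t ≤ ε` and of slope one for `t ≥ 2 * ε`. It is defined as the primitive of a smooth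
step from `0` to `1` on `[ε, 2 * ε]`, so it is nondecreasing and convex by construction. -/
noncomputable def smoothPosPart (ε t : ℝ) : ℝ :=
  ∫ u in (0 : ℝ)..t, Real.smoothTransition (u / ε - 1)

section SmoothPosPart

variable {ε t : ℝ}

lemma continuous_smoothTransition_div_sub_one (ε : ℝ) :
    Continuous fun u : ℝ => Real.smoothTransition (u / ε - 1) := by fun_prop

lemma hasDerivAt_smoothPosPart (ε t : ℝ) :
    HasDerivAt (smoothPosPart ε) (Real.smoothTransition (t / ε - 1)) t :=
  (continuous_smoothTransition_div_sub_one ε).integral_hasStrictDerivAt 0 t |>.hasDerivAt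

lemma deriv_smoothPosPart (ε : ℝ) :
    deriv (smoothPosPart ε) = fun t => Real.smoothTransition (t / ε - 1) :=
  funext fun t => (hasDerivAt_smoothPosPart ε t).deriv

lemma contDiff_smoothPosPart (ε : ℝ) : ContDiff ℝ ∞ (smoothPosPart ε) := by
  rw [contDiff_infty_iff_deriv, deriv_smoothPosPart]
  exact ⟨fun t => (hasDerivAt_smoothPosPart ε t).differentiableAt, by fun_prop⟩

lemma deriv_smoothPosPart_nonneg (ε t : ℝ) : 0 ≤ deriv (smoothPosPart ε) t := by
  rw [deriv_smoothPosPart]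
  exact Real.smoothTransition.nonneg _

lemma deriv_deriv_smoothPosPart_nonneg (hε : 0 ≤ ε) (t : ℝ) :
    0 ≤ deriv (deriv (smoothPosPart ε)) t := by
  have hmono : Monotone (deriv (smoothPosPart ε)) := by
    rw [deriv_smoothPosPart]
    exact fun a b hab => Real.smoothTransition.monotone (by gcongr)
  exact hmono.deriv_nonneg

lemma smoothPosPart_of_le (hε : 0 < ε) (ht : t ≤ ε) : smoothPosPart ε t = 0 := by
  have hzero : EqOn (fun u => Real.smoothTransition (u / ε - 1)) 0 (uIcc 0 t) := fun u hu =>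
    Real.smoothTransition.zero_of_nonpos <| by
      have hu : u ≤ ε := hu.2.trans (max_le hε.le ht)
      rwa [sub_nonpos, div_le_one hε]
  simpa [smoothPosPart] using intervalIntegral.integral_congr (μ := volume) hzero

lemma smoothPosPart_nonneg (hε : 0 < ε) (t : ℝ) : 0 ≤ smoothPosPart ε t := by
  have hmono : Monotone (smoothPosPart ε) := monotone_of_deriv_nonneg
    (fun t => (hasDerivAt_smoothPosPart ε t).differentiableAt) (deriv_smoothPosPart_nonneg ε)
  calc 0 = smoothPosPart ε (min t ε) := (smoothPosPart_of_le hε (min_le_right t ε)).symm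
    _ ≤ smoothPosPart ε t := hmono (min_le_left t ε)

lemma smoothPosPart_le_self (ε : ℝ) (ht : 0 ≤ t) : smoothPosPart ε t ≤ t := by
  calc smoothPosPart ε t ≤ ∫ _ in (0 : ℝ)..t, (1 : ℝ) :=
        intervalIntegral.integral_mono_on ht
          ((continuous_smoothTransition_div_sub_one ε).intervalIntegrable _ _)
          (by simp) fun u _ => Real.smoothTransition.le_one _
    _ = t := by simp

lemma sub_two_mul_le_smoothPosPart (hε : 0 < ε) (t : ℝ) : t - 2 * ε ≤ smoothPosPart ε t := by
  rcases le_total t (2 * ε) with ht | ht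
  · linarith [smoothPosPart_nonneg hε t]
  have hint (a b : ℝ) :
      IntervalIntegrable (fun u => Real.smoothTransition (u / ε - 1)) volume a b :=
    (continuous_smoothTransition_div_sub_one ε).intervalIntegrable a b
  have hone : EqOn (fun u => Real.smoothTransition (u / ε - 1)) 1 (uIcc (2 * ε) t) := fun u hu =>
    Real.smoothTransition.one_of_one_le <| by
      have hu : 2 * ε ≤ u := (le_min le_rfl ht).trans hu.1
      rw [le_sub_iff_add_le, le_div_iff₀ hε]
      linarith
  calc t - 2 * ε = ∫ u in (2 * ε)..t, Real.smoothTransition (u / ε - 1) := by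
        simp [intervalIntegral.integral_congr hone]
    _ = smoothPosPart ε t - smoothPosPart ε (2 * ε) :=
        (intervalIntegral.integral_interval_sub_left (hint _ _) (hint _ _)).symm
    _ ≤ smoothPosPart ε t := sub_le_self _ (smoothPosPart_nonneg hε _)

lemma smoothPosPart_comp_eventuallyEq_zero {X : Type*} [TopologicalSpace X] {f : X → ℝ}
    {x : X} (hf : ContinuousAt f x) (hε : 0 < ε) (hx : f x < ε) :
    smoothPosPart ε ∘ f =ᶠ[𝓝 x] fun _ => 0 :=
  (hf.eventually_lt_const hx).mono fun _ hy => smoothPosPart_of_le hε hy.le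

end SmoothPosPart

section SecondDerivative

variable {E F : Type*} [NormedAddCommGroup E] [NormedSpace ℝ E] [NormedAddCommGroup F]
  [NormedSpace ℝ F]

lemma differentiableAt_fderiv_of_contDiffAt_two {f : E → F} {x : E} (hf : ContDiffAt ℝ 2 f x) :
    DifferentiableAt ℝ (fderiv ℝ f) x :=
  (hf.fderiv_right (m := 1) (by norm_num)).differentiableAt (by norm_num)

lemma fderiv_fderiv_apply_const {f : E → F} {x : E} (hf : DifferentiableAt ℝ (fderiv ℝ f) x)
    (u v : E) : fderiv ℝ (fun y => fderiv ℝ f y v) x u = fderiv ℝ (fderiv ℝ f) x u v := by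
  rw [fderiv_clm_apply hf (by fun_prop)]
  simp

lemma fderiv_fderiv_comp {ψ : ℝ → ℝ} {f : E → ℝ} {x : E} (hψ : ContDiffAt ℝ 2 ψ (f x))
    (hf : ContDiffAt ℝ 2 f x) (u v : E) :
    fderiv ℝ (fderiv ℝ (ψ ∘ f)) x u v =
      deriv (deriv ψ) (f x) * (fderiv ℝ f x u * fderiv ℝ f x v) +
        deriv ψ (f x) * fderiv ℝ (fderiv ℝ f) x u v := by
  have hfderiv : fderiv ℝ (ψ ∘ f) =ᶠ[𝓝 x] fun y => deriv ψ (f y) • fderiv ℝ f y := by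
    filter_upwards [hf.eventually (by simp),
      hf.continuousAt.eventually (hψ.eventually (by simp))] with y hfy hψy
    exact ((hψy.differentiableAt (by norm_num)).hasDerivAt.comp_hasFDerivAt y
      (hfy.differentiableAt (by norm_num)).hasFDerivAt).fderiv
  have hderivψ : DifferentiableAt ℝ (deriv ψ) (f x) :=
    (differentiableAt_fderiv_of_contDiffAt_two hψ).clm_apply (differentiableAt_const 1)
  have hderivψf : HasFDerivAt (fun y => deriv ψ (f y)) (deriv (deriv ψ) (f x) • fderiv ℝ f x) x :=
    hderivψ.hasDerivAt.comp_hasFDerivAt x (hf.differentiableAt (by norm_num)).hasFDerivAt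
  rw [hfderiv.fderiv_eq,
    (hderivψf.fun_smul (differentiableAt_fderiv_of_contDiffAt_two hf).hasFDerivAt).fderiv]
  simp only [add_apply, smul_apply, ContinuousLinearMap.smulRight_apply, smul_eq_mul]
  ring

end SecondDerivative

section Laplacian

variable {E : Type*} [NormedAddCommGroup E] [InnerProductSpace ℝ E] [FiniteDimensional ℝ E]

section

variable {F : Type*} [NormedAddCommGroup F] [NormedSpace ℝ F]

lemma laplacian_eq_sum_fderiv_fderiv {ι : Type*} [Fintype ι] (b : OrthonormalBasis ι ℝ E)
    (f : E → F) (x : E) : Δ f x = ∑ i, fderiv ℝ (fderiv ℝ f) x (b i) (b i) := by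
  simp [InnerProductSpace.laplacian_eq_iteratedFDeriv_orthonormalBasis f b,
    iteratedFDeriv_two_apply]

lemma laplacian_comp_add_left (f : E → F) (a x : E) :
    Δ (fun y => f (a + y)) x = Δ f (a + x) := by
  simp [InnerProductSpace.laplacian_eq_iteratedFDeriv_stdOrthonormalBasis,
    iteratedFDeriv_comp_add_left]

end

lemma lapl_eq_laplacian {n : ℕ} {f : EuclideanSpace ℝ (Fin n) → ℝ} {x : EuclideanSpace ℝ (Fin n)}
    (hf : ContDiffAt ℝ 2 f x) : lapl f x = Δ f x := by
  simp [lapl, laplacian_eq_sum_fderiv_fderiv (EuclideanSpace.basisFun (Fin n) ℝ),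
    fderiv_fderiv_apply_const (differentiableAt_fderiv_of_contDiffAt_two hf)]

lemma IsHarmonicOn.laplacian_eq_zero {n : ℕ} {f : EuclideanSpace ℝ (Fin n) → ℝ}
    {U : Set (EuclideanSpace ℝ (Fin n))} {x : EuclideanSpace ℝ (Fin n)} (hf : IsHarmonicOn f U)
    (hU : IsOpen U) (hx : x ∈ U) : Δ f x = 0 := by
  rw [← lapl_eq_laplacian (hf.1.contDiffAt (hU.mem_nhds hx)), hf.2 x hx]

lemma laplacian_comp {ψ : ℝ → ℝ} {f : E → ℝ} {x : E} (hψ : ContDiffAt ℝ 2 ψ (f x))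
    (hf : ContDiffAt ℝ 2 f x) :
    Δ (ψ ∘ f) x = deriv (deriv ψ) (f x) * ‖fderiv ℝ f x‖ ^ 2 + deriv ψ (f x) * Δ f x := by
  simp_rw [laplacian_eq_sum_fderiv_fderiv (stdOrthonormalBasis ℝ E), fderiv_fderiv_comp hψ hf,
    Finset.sum_add_distrib, ← Finset.mul_sum]
  rw [(stdOrthonormalBasis ℝ E).norm_dual]
  simp [pow_two]

lemma laplacian_comp_nonneg {ψ : ℝ → ℝ} {f : E → ℝ} {x : E} (hψ : ContDiffAt ℝ 2 ψ (f x))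
    (hf : ContDiffAt ℝ 2 f x) (hψ' : 0 ≤ deriv ψ (f x)) (hψ'' : 0 ≤ deriv (deriv ψ) (f x))
    (hlap : 0 ≤ Δ f x) : 0 ≤ Δ (ψ ∘ f) x := by
  rw [laplacian_comp hψ hf]
  positivity

end Laplacian

section Average

lemma integrableOn_ball_of_continuousOn {X F : Type*} [MetricSpace X] [ProperSpace X]
    [MeasurableSpace X] [OpensMeasurableSpace X] [NormedAddCommGroup F] {μ : Measure X}
    [IsFiniteMeasureOnCompacts μ] {f : X → F} {x : X} {s : ℝ}
    (hf : ContinuousOn f (closedBall x s)) : IntegrableOn f (ball x s) μ :=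
  (hf.integrableOn_compact (isCompact_closedBall x s)).mono_set ball_subset_closedBall

lemma setAverage_mono_on {α : Type*} [MeasurableSpace α] {μ : Measure α} {f g : α → ℝ} {s : Set α}
    (hf : IntegrableOn f s μ) (hg : IntegrableOn g s μ) (hs : MeasurableSet s)
    (hfg : ∀ y ∈ s, f y ≤ g y) : ⨍ y in s, f y ∂μ ≤ ⨍ y in s, g y ∂μ := by
  rw [setAverage_eq, setAverage_eq]
  exact smul_le_smul_of_nonneg_left (setIntegral_mono_on hf hg hs hfg) (by positivity)

lemma setAverage_ball_zero_comp_add_left {E F : Type*} [NormedAddCommGroup E] [MeasurableSpace E]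
    [BorelSpace E] [NormedAddCommGroup F] [NormedSpace ℝ F] (μ : Measure E)
    [μ.IsAddLeftInvariant] (f : E → F) (x : E) (s : ℝ) :
    ⨍ y in ball 0 s, f (x + y) ∂μ = ⨍ y in ball x s, f y ∂μ := by
  have hpre : (fun y => x + y) ⁻¹' ball x s = ball 0 s := by simp
  have hmeas := measurePreserving_add_left μ x
  rw [setAverage_eq, setAverage_eq, ← hpre,
    hmeas.setIntegral_preimage_emb (measurableEmbedding_addLeft x),
    hmeas.measureReal_preimage measurableSet_ball.nullMeasurableSet]

end Average

/-- The weight `(s² - ‖y‖²) / 2` on the ball of radius `s` about the origin, extended by zero, which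
recovers the radial field `y` on the ball as minus its gradient. Truncating `‖y‖` at `s` makes the
extension by zero automatic. -/
noncomputable def ballPotential {E : Type*} [NormedAddCommGroup E] (s : ℝ) (y : E) : ℝ :=
  (s ^ 2 - min ‖y‖ s ^ 2) / 2

section BallPotential

variable {E : Type*} [NormedAddCommGroup E] {s : ℝ}

lemma ballPotential_nonneg (hs : 0 ≤ s) (y : E) : 0 ≤ ballPotential s y := by
  have : min ‖y‖ s ^ 2 ≤ s ^ 2 := by
    gcongr
    exact min_le_right _ _
  unfold ballPotential
  linarith

lemma ballPotential_of_le_norm {y : E} (hy : s ≤ ‖y‖) : ballPotential s y = 0 := by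
  simp [ballPotential, hy]

lemma ballPotential_of_norm_le {y : E} (hy : ‖y‖ ≤ s) :
    ballPotential s y = (s ^ 2 - ‖y‖ ^ 2) / 2 := by
  simp [ballPotential, hy]

lemma hasCompactSupport_ballPotential [ProperSpace E] (s : ℝ) :
    HasCompactSupport (ballPotential s : E → ℝ) :=
  .intro (isCompact_closedBall (0 : E) s) fun y hy =>
    ballPotential_of_le_norm (le_of_lt (by simpa using hy))

lemma lipschitzWith_ballPotential (hs : 0 ≤ s) :
    LipschitzWith s.toNNReal (ballPotential s : E → ℝ) := by
  refine .of_dist_le' fun y z => ?_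
  have hfactor : ballPotential s z - ballPotential s y =
      (min ‖y‖ s + min ‖z‖ s) * (min ‖y‖ s - min ‖z‖ s) / 2 := by
    simp only [ballPotential]
    ring
  have hmin : |min ‖y‖ s - min ‖z‖ s| ≤ dist y z :=
    (abs_min_sub_min_le_max _ _ _ _).trans
      (by simpa [dist_eq_norm] using abs_norm_sub_norm_le y z)
  have hsum : |min ‖y‖ s + min ‖z‖ s| ≤ 2 * s := by
    rw [abs_of_nonneg (by positivity)]
    linarith [min_le_right ‖y‖ s, min_le_right ‖z‖ s]
  calc dist (ballPotential s y) (ballPotential s z)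
      = |min ‖y‖ s + min ‖z‖ s| * |min ‖y‖ s - min ‖z‖ s| / 2 := by
        rw [dist_comm, Real.dist_eq, hfactor, abs_div, abs_mul, abs_two]
    _ ≤ 2 * s * dist y z / 2 := by gcongr
    _ = s * dist y z := by ring

lemma lineDeriv_ballPotential_of_lt_norm [NormedSpace ℝ E] {y : E} (hy : s < ‖y‖) (v : E) :
    lineDeriv ℝ (ballPotential s) y v = 0 := by
  have hzero : ballPotential s =ᶠ[𝓝 y] fun _ => 0 := by
    filter_upwards [continuous_norm.continuousAt.eventually_const_lt hy] with z hz
    exact ballPotential_of_le_norm hz.le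
  rw [hzero.lineDeriv_eq]
  simp [lineDeriv]

end BallPotential

section MeanValue

variable {E : Type*} [NormedAddCommGroup E] [InnerProductSpace ℝ E]

lemma lineDeriv_ballPotential_of_norm_lt {s : ℝ} {y : E} (hy : ‖y‖ < s) (v : E) :
    lineDeriv ℝ (ballPotential s) y v = -inner ℝ y v := by
  have hquad : ballPotential s =ᶠ[𝓝 y] fun z => (s ^ 2 - ‖z‖ ^ 2) / 2 := by
    filter_upwards [continuous_norm.continuousAt.eventually_lt_const hy] with z hz
    exact ballPotential_of_norm_le hz.le
  have hderiv : HasFDerivAt (fun z : E => (s ^ 2 - ‖z‖ ^ 2) / 2) (-innerSL ℝ y) y := by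
    have hnormsq := (hasStrictFDerivAt_norm_sq y).hasFDerivAt.const_sub (s ^ 2)
    refine (hnormsq.mul_const 2⁻¹).congr_fderiv ?_
    ext v
    simp
  rw [hquad.lineDeriv_eq, hderiv.differentiableAt.lineDeriv_eq_fderiv, hderiv.fderiv]
  simp

variable [FiniteDimensional ℝ E] [MeasurableSpace E] [BorelSpace E]
  (μ : Measure E) [μ.IsAddHaarMeasure] {g : E → ℝ} {s : ℝ}

lemma lineDeriv_ballPotential_ae_eq_indicator (hs : 0 < s) (v : E) :
    (fun y => lineDeriv ℝ (ballPotential s) y v) =ᵐ[μ]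
      (ball 0 s).indicator fun y => -inner ℝ y v := by
  have hsphere : ∀ᵐ y ∂μ, y ∉ sphere (0 : E) s :=
    measure_eq_zero_iff_ae_notMem.1 (Measure.addHaar_sphere_of_ne_zero μ 0 hs.ne')
  filter_upwards [hsphere] with y hy
  rcases lt_or_gt_of_ne (show ‖y‖ ≠ s by simpa using hy) with hlt | hgt
  · rw [lineDeriv_ballPotential_of_norm_lt hlt, indicator_of_mem (by simpa using hlt)]
  · rw [lineDeriv_ballPotential_of_lt_norm hgt, indicator_of_notMem (by simpa using hgt.le)]

lemma integral_ballPotential_mul_fderiv {f : E → ℝ} (hf : ContDiff ℝ 1 f)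
    (hfs : HasCompactSupport f) (hs : 0 < s) (v : E) :
    ∫ y, ballPotential s y * fderiv ℝ f y v ∂μ = ∫ y in ball 0 s, inner ℝ y v * f y ∂μ := by
  obtain ⟨C, hC⟩ := hf.lipschitzWith_of_hasCompactSupport hfs one_ne_zero
  calc ∫ y, ballPotential s y * fderiv ℝ f y v ∂μ
      = ∫ y, lineDeriv ℝ f y v * ballPotential s y ∂μ := by
        simp_rw [(hf.differentiable one_ne_zero).differentiableAt.lineDeriv_eq_fderiv, mul_comm]
    _ = ∫ y, lineDeriv ℝ (ballPotential s) y (-v) * f y ∂μ :=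
        hC.integral_lineDeriv_mul_eq (lipschitzWith_ballPotential hs.le)
          (hasCompactSupport_ballPotential s) v
    _ = ∫ y, (ball 0 s).indicator (fun y => inner ℝ y v * f y) y ∂μ := by
        refine integral_congr_ae ?_
        filter_upwards [lineDeriv_ballPotential_ae_eq_indicator μ hs (-v)] with y hy
        rw [hy, indicator_mul_left]
        simp
    _ = ∫ y in ball 0 s, inner ℝ y v * f y ∂μ := integral_indicator measurableSet_ball

lemma integral_ballPotential_mul_laplacian (hg : ContDiff ℝ 2 g) (hgs : HasCompactSupport g)
    (hs : 0 < s) :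
    ∫ y, ballPotential s y * Δ g y ∂μ = ∫ y in ball 0 s, fderiv ℝ g y y ∂μ := by
  let b := stdOrthonormalBasis ℝ E
  have hfderiv : ContDiff ℝ 1 (fderiv ℝ g) := hg.fderiv_right (by norm_num)
  have hpartial (i) : ContDiff ℝ 1 fun y => fderiv ℝ g y (b i) := hfderiv.clm_apply contDiff_const
  have hpartial_supp (i) : HasCompactSupport fun y => fderiv ℝ g y (b i) :=
    hgs.fderiv_apply ℝ (b i)
  have hexpand (L : E →L[ℝ] ℝ) (y : E) : L y = ∑ i, inner ℝ y (b i) * L (b i) := by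
    conv_lhs => rw [← b.sum_repr' y]
    simp [real_inner_comm]
  calc ∫ y, ballPotential s y * Δ g y ∂μ
      = ∑ i, ∫ y, ballPotential s y * fderiv ℝ (fun z => fderiv ℝ g z (b i)) y (b i) ∂μ := by
        rw [← integral_finsetSum]
        · simp_rw [laplacian_eq_sum_fderiv_fderiv b, Finset.mul_sum, fderiv_fderiv_apply_const
            (hfderiv.differentiable one_ne_zero _)]
        · exact fun i _ => ((lipschitzWith_ballPotential hs.le).continuous.mul
            (((hpartial i).continuous_fderiv one_ne_zero).clm_apply
              continuous_const)).integrable_of_hasCompactSupport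
              (hasCompactSupport_ballPotential s).mul_right
    _ = ∑ i, ∫ y in ball 0 s, inner ℝ y (b i) * fderiv ℝ g y (b i) ∂μ := by
        simp_rw [integral_ballPotential_mul_fderiv μ (hpartial _) (hpartial_supp _) hs]
    _ = ∫ y in ball 0 s, ∑ i, inner ℝ y (b i) * fderiv ℝ g y (b i) ∂μ :=
        (integral_finsetSum _ fun i _ => (((continuous_id.inner continuous_const).mul
          (hpartial i).continuous).integrable_of_hasCompactSupport
            (hpartial_supp i).mul_left).integrableOn).symm
    _ = ∫ y in ball 0 s, fderiv ℝ g y y ∂μ :=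
        integral_congr_ae (.of_forall fun y => (hexpand (fderiv ℝ g y) y).symm)

lemma hasDerivAt_setIntegral_ball_comp_smul (hg : ContDiff ℝ 1 g) (hgs : HasCompactSupport g)
    (r : ℝ) :
    HasDerivAt (fun r : ℝ => ∫ y in ball 0 s, g (r • y) ∂μ)
      (∫ y in ball 0 s, fderiv ℝ g (r • y) y ∂μ) r := by
  have hfderiv : Continuous (fderiv ℝ g) := hg.continuous_fderiv one_ne_zero
  obtain ⟨C, hC⟩ := (hgs.fderiv ℝ).exists_bound_of_continuous hfderiv
  have hint {f : E → ℝ} (hf : Continuous f) : IntegrableOn f (ball 0 s) μ :=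
    integrableOn_ball_of_continuousOn hf.continuousOn
  refine (hasDerivAt_integral_of_dominated_loc_of_deriv_le (s := univ)
    (F' := fun r y => fderiv ℝ g (r • y) y) (bound := fun y => C * ‖y‖) univ_mem
    (.of_forall fun r => (hg.continuous.comp (by fun_prop)).aestronglyMeasurable)
    (hint (hg.continuous.comp (by fun_prop)))
    ((hfderiv.comp (by fun_prop)).clm_apply continuous_id).aestronglyMeasurable
    (.of_forall fun y r _ => ?_) (hint (by fun_prop)) (.of_forall fun y r _ => ?_)).2
  · exact (fderiv ℝ g (r • y)).le_of_opNorm_le (hC _) y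
  · have hline : HasDerivAt (fun r : ℝ => r • y) y r := by
      simpa using (hasDerivAt_id r).smul_const y
    exact (hg.differentiable one_ne_zero _).hasFDerivAt.comp_hasDerivAt r hline

lemma setIntegral_ball_fderiv_smul_nonneg (hg : ContDiff ℝ 2 g) (hgs : HasCompactSupport g)
    (hs : 0 < s) (hlap : ∀ y ∈ ball 0 s, 0 ≤ Δ g y) {r : ℝ} (hr : r ∈ Ioo 0 1) :
    0 ≤ ∫ y in ball 0 s, fderiv ℝ g (r • y) y ∂μ := by
  obtain ⟨hr_pos, hr_lt_one⟩ := hr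
  have hflux : 0 ≤ ∫ y in ball 0 (r * s), fderiv ℝ g y y ∂μ := by
    rw [← integral_ballPotential_mul_laplacian μ hg hgs (mul_pos hr_pos hs)]
    refine integral_nonneg fun y => ?_
    rcases le_or_gt (r * s) ‖y‖ with hy | hy
    · simp [ballPotential_of_le_norm hy]
    · refine mul_nonneg (ballPotential_nonneg (mul_pos hr_pos hs).le y) (hlap y ?_)
      simpa using hy.trans_le (mul_le_of_le_one_left hs.le hr_lt_one.le)
  have hscale : r * ∫ y in ball 0 s, fderiv ℝ g (r • y) y ∂μ =
      (r ^ Module.finrank ℝ E)⁻¹ * ∫ y in ball 0 (r * s), fderiv ℝ g y y ∂μ := by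
    have := Measure.setIntegral_comp_smul_of_pos μ (fun y => fderiv ℝ g y y) (ball 0 s) hr_pos
    simpa [_root_.smul_ball hr_pos.ne', abs_of_pos hr_pos, integral_const_mul] using this
  exact nonneg_of_mul_nonneg_right (hscale ▸ by positivity) hr_pos

lemma apply_zero_le_setAverage_ball_of_laplacian_nonneg (hg : ContDiff ℝ 2 g)
    (hgs : HasCompactSupport g) (hs : 0 < s) (hlap : ∀ y ∈ ball 0 s, 0 ≤ Δ g y) :
    g 0 ≤ ⨍ y in ball 0 s, g y ∂μ := by
  have hderiv := hasDerivAt_setIntegral_ball_comp_smul μ (s := s) (hg.of_le one_le_two) hgs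
  have hmono : MonotoneOn (fun r : ℝ => ∫ y in ball 0 s, g (r • y) ∂μ) (Icc 0 1) := by
    refine monotoneOn_of_deriv_nonneg (convex_Icc 0 1)
      (fun r _ => (hderiv r).continuousAt.continuousWithinAt)
      (fun r _ => (hderiv r).differentiableAt.differentiableWithinAt) fun r hr => ?_
    rw [interior_Icc] at hr
    rw [(hderiv r).deriv]
    exact setIntegral_ball_fderiv_smul_nonneg μ hg hgs hs hlap hr
  have hball : 0 < μ.real (ball (0 : E) s) :=
    ENNReal.toReal_pos (measure_ball_pos μ 0 hs).ne' measure_ball_lt_top.ne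
  rw [setAverage_eq, smul_eq_mul, le_inv_mul_iff₀ hball]
  simpa using hmono (left_mem_Icc.2 zero_le_one) (right_mem_Icc.2 zero_le_one) zero_le_one

end MeanValue

section Smoothness

variable {E : Type*} [NormedAddCommGroup E] [NormedSpace ℝ E]

lemma exists_contDiff_hasCompactSupport_eventuallyEq_nhdsSet {F : Type*} [NormedAddCommGroup F]
    [NormedSpace ℝ F] [FiniteDimensional ℝ E] {n : ℕ∞} {f : E → F} {K U : Set E}
    (hK : IsCompact K) (hU : IsOpen U) (hKU : K ⊆ U) (hf : ContDiffOn ℝ n f U) :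
    ∃ g : E → F, ContDiff ℝ n g ∧ HasCompactSupport g ∧ g =ᶠ[𝓝ˢ K] f := by
  obtain ⟨L, hL, hKL, hLU⟩ := exists_compact_between hK hU hKU
  obtain ⟨χ, hχK, hχL, -⟩ := exists_contMDiffMap_one_nhds_of_subset_interior
    (modelWithCornersSelf ℝ E) (n := n) hK.isClosed hKL
  have hχsupp : tsupport χ ⊆ L := closure_minimal
    (fun y hy => by_contra fun hyL => hy (hχL y hyL)) hL.isClosed
  refine ⟨fun y => χ y • f y, contDiff_iff_contDiffAt.2 fun y => ?_,
    .intro hL fun y hy => by simp [hχL y hy], hχK.mono fun y hy => by simp [hy]⟩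
  by_cases hy : y ∈ tsupport χ
  · exact χ.contMDiff.contDiff.contDiffAt.smul
      (hf.contDiffAt (hU.mem_nhds (hLU (hχsupp hy))))
  · refine (contDiffAt_const (c := (0 : F))).congr_of_eventuallyEq ?_
    filter_upwards [notMem_tsupport_iff_eventuallyEq.1 hy] with z hz
    simp [hz]

lemma contDiffAt_of_contDiffOn_pos {n : WithTop ℕ∞} {f : E → ℝ} {U : Set E} {x : E}
    (hU : IsOpen U) (hcont : ContinuousOn f U) (hf : ContDiffOn ℝ n f {x ∈ U | 0 < f x})
    (hx : x ∈ {x ∈ U | 0 < f x}) : ContDiffAt ℝ n f x :=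
  hf.contDiffAt ((hcont.isOpen_inter_preimage hU isOpen_Ioi).mem_nhds hx)

lemma contDiffOn_smoothPosPart_comp {n : ℕ∞} {f : E → ℝ} {U : Set E} {ε : ℝ}
    (hε : 0 < ε) (hU : IsOpen U) (hcont : ContinuousOn f U)
    (hf : ContDiffOn ℝ n f {x ∈ U | 0 < f x}) :
    ContDiffOn ℝ n (smoothPosPart ε ∘ f) U := by
  refine fun x hx => ContDiffAt.contDiffWithinAt ?_
  rcases lt_or_ge 0 (f x) with hpos | hnonpos
  · exact ((contDiff_smoothPosPart ε).of_le (mod_cast le_top)).contDiffAt.comp x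
      (contDiffAt_of_contDiffOn_pos hU hcont hf ⟨hx, hpos⟩)
  · exact contDiffAt_const.congr_of_eventuallyEq (smoothPosPart_comp_eventuallyEq_zero
      (hcont.continuousAt (hU.mem_nhds hx)) hε (hnonpos.trans_lt hε))

end Smoothness

section Subharmonic

variable {E : Type*} [NormedAddCommGroup E] [InnerProductSpace ℝ E] [FiniteDimensional ℝ E]
  {U : Set E} {h : E → ℝ}

lemma le_setAverage_ball_of_laplacian_nonneg [MeasurableSpace E] [BorelSpace E] (μ : Measure E)
    [μ.IsAddHaarMeasure] {f : E → ℝ} {x : E} {s : ℝ} (hU : IsOpen U) (hf : ContDiffOn ℝ 2 f U)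
    (hs : 0 < s) (hball : closedBall x s ⊆ U) (hlap : ∀ y ∈ ball x s, 0 ≤ Δ f y) :
    f x ≤ ⨍ y in ball x s, f y ∂μ := by
  obtain ⟨g, hg, hgs, hgf⟩ := exists_contDiff_hasCompactSupport_eventuallyEq_nhdsSet (n := 2)
    (isCompact_closedBall x s) hU hball hf
  have hgf_nhds (y) (hy : y ∈ closedBall x s) : g =ᶠ[𝓝 y] f :=
    hgf.filter_mono (nhds_le_nhdsSet hy)
  have htranslate : g (x + 0) ≤ ⨍ y in ball 0 s, g (x + y) ∂μ := by
    refine apply_zero_le_setAverage_ball_of_laplacian_nonneg μ (g := fun y => g (x + y))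
      (hg.comp (by fun_prop)) (hgs.comp_homeomorph (Homeomorph.addLeft x)) hs fun y hy => ?_
    have hxy : x + y ∈ ball x s := by simpa using hy
    rw [laplacian_comp_add_left, (InnerProductSpace.laplacian_congr_nhds
      (hgf_nhds _ (ball_subset_closedBall hxy))).eq_of_nhds]
    exact hlap _ hxy
  rw [add_zero, setAverage_ball_zero_comp_add_left,
    (hgf_nhds x (mem_closedBall_self hs.le)).eq_of_nhds] at htranslate
  rwa [← setAverage_congr_fun measurableSet_ball
    (.of_forall fun y hy => (hgf_nhds y (ball_subset_closedBall hy)).eq_of_nhds)]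

lemma laplacian_smoothPosPart_comp_nonneg {ε : ℝ} (hε : 0 < ε) (hU : IsOpen U)
    (hcont : ContinuousOn h U) (hsmooth : ContDiffOn ℝ 2 h {x ∈ U | 0 < h x})
    (hlap : ∀ x ∈ {x ∈ U | 0 < h x}, 0 ≤ Δ h x) {x : E} (hx : x ∈ U) :
    0 ≤ Δ (smoothPosPart ε ∘ h) x := by
  rcases lt_or_ge 0 (h x) with hpos | hnonpos
  · exact laplacian_comp_nonneg (contDiff_infty.1 (contDiff_smoothPosPart ε) 2).contDiffAt
      (contDiffAt_of_contDiffOn_pos hU hcont hsmooth ⟨hx, hpos⟩) (deriv_smoothPosPart_nonneg ε _)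
      (deriv_deriv_smoothPosPart_nonneg hε.le _) (hlap x ⟨hx, hpos⟩)
  · have hzero : smoothPosPart ε ∘ h =ᶠ[𝓝 x] fun _ => 0 := smoothPosPart_comp_eventuallyEq_zero
      (hcont.continuousAt (hU.mem_nhds hx)) hε (hnonpos.trans_lt hε)
    rw [(InnerProductSpace.laplacian_congr_nhds hzero).eq_of_nhds]
    simp [InnerProductSpace.laplacian_const]

theorem stmt6_general [MeasurableSpace E] [BorelSpace E] (μ : Measure E) [μ.IsAddHaarMeasure]
    {x : E} {s : ℝ} (hU : IsOpen U) (hcont : ContinuousOn h U) (hnonneg : ∀ x ∈ U, 0 ≤ h x)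
    (hsmooth : ContDiffOn ℝ 2 h {x ∈ U | 0 < h x}) (hlap : ∀ x ∈ {x ∈ U | 0 < h x}, 0 ≤ Δ h x)
    (hs : 0 < s) (hball : closedBall x s ⊆ U) : h x ≤ ⨍ y in ball x s, h y ∂μ := by
  have hballU : ball x s ⊆ U := ball_subset_closedBall.trans hball
  have happrox (ε : ℝ) (hε : 0 < ε) : h x - 2 * ε ≤ ⨍ y in ball x s, h y ∂μ := by
    have hψh : ContDiffOn ℝ 2 (smoothPosPart ε ∘ h) U :=
      contDiffOn_smoothPosPart_comp hε hU hcont hsmooth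
    calc h x - 2 * ε ≤ smoothPosPart ε (h x) := sub_two_mul_le_smoothPosPart hε (h x)
      _ ≤ ⨍ y in ball x s, smoothPosPart ε (h y) ∂μ :=
          le_setAverage_ball_of_laplacian_nonneg μ hU hψh hs hball fun y hy =>
            laplacian_smoothPosPart_comp_nonneg hε hU hcont hsmooth hlap (hballU hy)
      _ ≤ ⨍ y in ball x s, h y ∂μ :=
          setAverage_mono_on (integrableOn_ball_of_continuousOn (hψh.continuousOn.mono hball))
            (integrableOn_ball_of_continuousOn (hcont.mono hball)) measurableSet_ball
            fun y hy => smoothPosPart_le_self ε (hnonneg y (hballU hy))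
  refine le_of_forall_pos_le_add fun δ hδ => ?_
  linarith [happrox (δ / 2) (half_pos hδ)]

end Subharmonic

theorem stmt6 (n : ℕ) (U : Set (EuclideanSpace ℝ (Fin n)))
    (h : EuclideanSpace ℝ (Fin n) → ℝ)
    (hU : IsOpen U)
    (hcont : ContinuousOn h U)
    (hnonneg : ∀ x ∈ U, 0 ≤ h x)
    (hharm : IsHarmonicOn h {x ∈ U | 0 < h x}) :
    ∀ x ∈ U, ∀ s : ℝ, 0 < s → closedBall x s ⊆ U →
      h x ≤ ⨍ y in ball x s, h y := by
  exact fun x _ s => stmt6_general volume hU hcont hnonneg hharm.1 fun y hy =>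
    (hharm.laplacian_eq_zero (hcont.isOpen_inter_preimage hU isOpen_Ioi) hy).ge
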